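/- arXiv:1512.04307 — 2 statements merged into one kernel-verified Lean document; each statement's English description precedes it below -/
import Mathlib

section
/- Let α > 0, a ∈ (0, π), b = (2a/α) tan(a/2), and M = 2a² e^{b} / cos²(a/2). Then the function θ(z) = 2 ln(cos(a z)/cos(a/2)) + b satisfies θ''(z) + M e^{-θ(z)} = 0 for all z ∈ (-1/2, 1/2), together with the Robin boundary conditions θ'(1/2) = -α θ(1/2) and θ'(-1/2) = α θ(-1/2). -/
open Real Set

/-!
Wherever `cos (a z) ≠ 0`, the profile satisfies `θ' = -2 a tan (a z)`, hence
`θ'' = -2 a² / cos² (a z)`. There `exp (-θ) = (cos (a / 2) / cos (a z))² exp (-b)`, and `M` is the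
constant that makes `M exp (-θ) = 2 a² / cos² (a z)`. At `z = ±1/2` the logarithm vanishes, so
`θ = b`, and as `θ` is even both Robin conditions say that `α b = 2 a tan (a / 2)`.
-/

/-- The profile `θ_{a,b}` of the axial steady states, normalised so that its value at the electrodes
`z = ±1/2` is `b`. It agrees with the paper's formula where `cos (a z)` and `cos (a / 2)` have the
same sign, since `Real.log x` is `log |x|` for `x < 0` and `x / 0 = 0`. -/
noncomputable def axialProfile (a b z : ℝ) : ℝ :=
  2 * log (cos (a * z) / cos (a / 2)) + b

section axialProfile

variable {a b z : ℝ}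

lemma axialProfile_neg (a b z : ℝ) : axialProfile a b (-z) = axialProfile a b z := by
  simp only [axialProfile, mul_neg, cos_neg]

lemma axialProfile_one_half (ha : cos (a / 2) ≠ 0) : axialProfile a b (1 / 2) = b := by
  simp only [axialProfile, mul_one_div, div_self ha, log_one, mul_zero, zero_add]

lemma deriv_axialProfile_neg (a b z : ℝ) :
    deriv (axialProfile a b) (-z) = -deriv (axialProfile a b) z := by
  have hcomp := deriv_comp_neg (axialProfile a b) z
  simp only [axialProfile_neg] at hcomp
  rw [hcomp, neg_neg]

lemma hasDerivAt_axialProfile (ha : cos (a / 2) ≠ 0) (hz : cos (a * z) ≠ 0) :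
    HasDerivAt (axialProfile a b) (-2 * a * tan (a * z)) z := by
  have hlog := ((hasDerivAt_const_mul a).cos.div_const (cos (a / 2))).log (div_ne_zero hz ha)
  refine ((hlog.const_mul 2).add_const b).congr_deriv ?_
  rw [tan_eq_sin_div_cos]
  field_simp

lemma hasDerivAt_deriv_axialProfile (ha : cos (a / 2) ≠ 0) (hz : cos (a * z) ≠ 0) :
    HasDerivAt (deriv (axialProfile a b)) (-2 * a ^ 2 / cos (a * z) ^ 2) z := by
  have htan : HasDerivAt (fun y => -2 * a * tan (a * y)) (-2 * a ^ 2 / cos (a * z) ^ 2) z :=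
    (((hasDerivAt_tan hz).comp z (hasDerivAt_const_mul a)).const_mul (-2 * a)).congr_deriv
      (by ring)
  have hcos : ∀ᶠ y in nhds z, cos (a * y) ≠ 0 :=
    ContinuousAt.eventually_ne (by fun_prop) hz
  exact htan.congr_of_eventuallyEq <|
    hcos.mono fun y hy => (hasDerivAt_axialProfile ha hy).deriv

lemma exp_neg_axialProfile (ha : cos (a / 2) ≠ 0) (hz : cos (a * z) ≠ 0) :
    exp (-axialProfile a b z) = cos (a / 2) ^ 2 / (cos (a * z) ^ 2 * exp b) := by
  have hsq : exp (2 * log (cos (a * z) / cos (a / 2))) = (cos (a * z) / cos (a / 2)) ^ 2 := by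
    rw [two_mul, exp_add, exp_log_eq_abs (div_ne_zero hz ha), abs_mul_abs_self, sq]
  rw [axialProfile, exp_neg, exp_add, hsq]
  field_simp

lemma deriv_deriv_axialProfile_add (ha : cos (a / 2) ≠ 0) (hz : cos (a * z) ≠ 0) :
    deriv (deriv (axialProfile a b)) z +
      2 * a ^ 2 * exp b / cos (a / 2) ^ 2 * exp (-axialProfile a b z) = 0 := by
  rw [(hasDerivAt_deriv_axialProfile ha hz).deriv, exp_neg_axialProfile ha hz]
  field_simp
  ring

lemma deriv_axialProfile_one_half (ha : cos (a / 2) ≠ 0) :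
    deriv (axialProfile a b) (1 / 2) = -(2 * a * tan (a / 2)) := by
  have hz : cos (a * (1 / 2)) ≠ 0 := by rwa [mul_one_div]
  rw [(hasDerivAt_axialProfile ha hz).deriv, mul_one_div]
  ring

end axialProfile

lemma cos_mul_pos_of_abs_lt_pi {a z : ℝ} (ha : |a| < π) (hz : |z| ≤ 1 / 2) :
    0 < cos (a * z) := by
  have haz : |a * z| < π / 2 := by
    calc |a * z| = |a| * |z| := abs_mul a z
      _ ≤ |a| * (1 / 2) := by gcongr
      _ < π / 2 := by linarith
  exact cos_pos_of_mem_Ioo (abs_lt.mp haz)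

theorem axial_steady_state_current_general {α a b M : ℝ} (ha : cos (a / 2) ≠ 0)
    (hb : α * b = 2 * a * tan (a / 2)) (hM : M = 2 * a ^ 2 * exp b / cos (a / 2) ^ 2) :
    (∀ z, 0 < cos (a * z) / cos (a / 2) →
      deriv (deriv (axialProfile a b)) z + M * exp (-axialProfile a b z) = 0) ∧
    deriv (axialProfile a b) (1 / 2) = -α * axialProfile a b (1 / 2) ∧
    deriv (axialProfile a b) (-1 / 2) = α * axialProfile a b (-1 / 2) := by
  have robin : deriv (axialProfile a b) (1 / 2) = -α * axialProfile a b (1 / 2) := by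
    rw [deriv_axialProfile_one_half ha, axialProfile_one_half ha, ← hb, neg_mul]
  refine ⟨fun z hz => ?_, robin, ?_⟩
  · rw [hM]
    exact deriv_deriv_axialProfile_add ha (div_ne_zero_iff.mp hz.ne').1
  · rw [neg_div, deriv_axialProfile_neg, axialProfile_neg, robin, neg_mul, neg_neg]

/-- For α > 0, a ∈ (0, π), b = (2a/α) tan(a/2), and
M = 2a² e^b / cos²(a/2), the function θ(z) = 2 ln(cos(az)/cos(a/2)) + b satisfies
θ'' + M e^{-θ} = 0 on (-1/2, 1/2), with Robin conditions θ'(1/2) = -α θ(1/2) and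
θ'(-1/2) = α θ(-1/2). -/
theorem axial_steady_state_current (α a b M : ℝ) (hα : 0 < α)
    (ha : a ∈ Set.Ioo 0 Real.pi)
    (hb : b = (2 * a / α) * Real.tan (a / 2))
    (hM : M = 2 * a ^ 2 * Real.exp b / Real.cos (a / 2) ^ 2)
    (θ : ℝ → ℝ)
    (hθ : ∀ z : ℝ, θ z = 2 * Real.log (Real.cos (a * z) / Real.cos (a / 2)) + b) :
    (∀ z ∈ Set.Ioo (-(1:ℝ)/2) (1/2),
      deriv (deriv θ) z + M * Real.exp (-θ z) = 0) ∧
    deriv θ (1/2) = -α * θ (1/2) ∧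
    deriv θ (-(1:ℝ)/2) = α * θ (-(1:ℝ)/2) := by
  obtain rfl : θ = axialProfile a b := funext hθ
  have hcos : ∀ z, |z| ≤ 1 / 2 → 0 < cos (a * z) := fun z =>
    cos_mul_pos_of_abs_lt_pi ((abs_of_pos ha.1).trans_lt ha.2)
  have hcos_half : 0 < cos (a / 2) := mul_one_div a 2 ▸ hcos (1 / 2) (by norm_num)
  have hαb : α * b = 2 * a * tan (a / 2) := by
    rw [hb]
    field_simp
  obtain ⟨ode, robin⟩ := axial_steady_state_current_general hcos_half.ne' hαb hM
  refine ⟨fun z hz => ode z (div_pos (hcos z ?_) hcos_half), robin⟩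
  exact abs_le.mpr ⟨by linarith [hz.1], hz.2.le⟩
end

section
/- For every α > 0, the map J_α(a) = 2a² e^{(2a/α) tan(a/2)} / cos²(a/2) is continuous and strictly increasing on (0, π), with J_α(a) → 0 as a → 0⁺ and J_α(a) → +∞ as a → π⁻; consequently, for every M > 0 there is exactly one a ∈ (0, π) with J_α(a) = M. -/
/-!
Every factor of `J_α(a) = 2 a² · exp ((2a/α) tan (a/2)) · cos (a/2)⁻²` increases on `[0, π)`, and
there `tan (a/2)` and `cos (a/2)⁻¹` are continuous, so `J_α` is continuous and strictly increasing.
It vanishes at `0`. As `a → π⁻` the first factor tends to `2π² > 0` and the other two blow up.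
Existence for each `M > 0` is then the intermediate value theorem, and uniqueness is monotonicity.
-/

open Real Set Filter

open scoped Topology

theorem existsUnique_mem_Ioo_eq_of_tendsto_atTop {X Y : Type*}
    [ConditionallyCompleteLinearOrder X] [TopologicalSpace X] [OrderTopology X] [DenselyOrdered X]
    [LinearOrder Y] [TopologicalSpace Y] [OrderClosedTopology Y]
    {f : X → Y} {a b : X} {l y : Y} (hab : a < b)
    (hcont : ContinuousOn f (Ioo a b)) (hinj : InjOn f (Ioo a b))
    (hleft : Tendsto f (𝓝[>] a) (𝓝 l)) (hright : Tendsto f (𝓝[<] b) atTop) (hy : l < y) :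
    ∃! x, x ∈ Ioo a b ∧ f x = y := by
  have := nhdsGT_neBot_of_exists_gt ⟨b, hab⟩
  have := nhdsLT_neBot_of_exists_lt ⟨a, hab⟩
  obtain ⟨x, hx, hxy⟩ := isPreconnected_Ioo.intermediate_value_Ioi
    (le_principal_iff.2 (Ioo_mem_nhdsGT hab)) (le_principal_iff.2 (Ioo_mem_nhdsLT hab))
    hcont hleft hright hy
  exact ⟨x, ⟨hx, hxy⟩, fun z hz => hinj hz.1 hx (hz.2.trans hxy.symm)⟩

theorem tendsto_div_const_nhdsLT {𝕜 : Type*} [Field 𝕜] [LinearOrder 𝕜] [IsStrictOrderedRing 𝕜]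
    [TopologicalSpace 𝕜] [ContinuousMul 𝕜] {r : 𝕜} (hr : 0 < r) (c : 𝕜) :
    Tendsto (fun x => x / r) (𝓝[<] c) (𝓝[<] (c / r)) :=
  (continuous_id.div_const r).continuousWithinAt.tendsto_nhdsWithin
    fun _ hx => (div_lt_div_iff_of_pos_right hr).2 hx

theorem cos_half_pos {a : ℝ} (ha : a ∈ Ioo (-π) π) : 0 < cos (a / 2) :=
  cos_pos_of_mem_Ioo ⟨by linarith [ha.1], by linarith [ha.2]⟩

theorem continuousOn_tan_half : ContinuousOn (fun a : ℝ => tan (a / 2)) (Ioo (-π) π) :=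
  continuousOn_tan.comp (by fun_prop) fun _ ha => (cos_half_pos ha).ne'

/-- The function `J_α`: the value of `λ𝓘²/δ²` for which
`θ(z) = 2 ln (cos (a z) / cos (a/2)) + (2a/α) tan (a/2)` is a steady state of the
current-controlled axial problem. It is defined for all real `α` and `a`, but has this meaning only
for `0 < α` and `0 < a < π`. -/
noncomputable def steadyStateForcing (α a : ℝ) : ℝ :=
  2 * a ^ 2 * exp ((2 * a / α) * tan (a / 2)) / cos (a / 2) ^ 2

section steadyStateForcing

variable (α : ℝ)

theorem steadyStateForcing_zero : steadyStateForcing α 0 = 0 := by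
  simp [steadyStateForcing]

theorem continuousOn_steadyStateForcing : ContinuousOn (steadyStateForcing α) (Ioo (-π) π) := by
  have htan := continuousOn_tan_half
  unfold steadyStateForcing
  exact ContinuousOn.div (by fun_prop) (by fun_prop) fun a ha => (pow_pos (cos_half_pos ha) 2).ne'

theorem tendsto_steadyStateForcing_zero : Tendsto (steadyStateForcing α) (𝓝 0) (𝓝 0) := by
  have hcont : ContinuousAt (steadyStateForcing α) 0 :=
    (continuousOn_steadyStateForcing α).continuousAt
      (Ioo_mem_nhds (neg_lt_zero.2 pi_pos) pi_pos)
  simpa only [steadyStateForcing_zero] using hcont.tendsto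

variable {α}

theorem strictMonoOn_steadyStateForcing (hα : 0 < α) :
    StrictMonoOn (steadyStateForcing α) (Ico 0 π) := by
  rintro a ⟨ha, _⟩ b ⟨_, hbπ⟩ hab
  have hcos_pos : 0 < cos (b / 2) := cos_half_pos ⟨by linarith, hbπ⟩
  have hcos : cos (b / 2) < cos (a / 2) :=
    cos_lt_cos_of_nonneg_of_le_pi (by linarith) (by linarith) (by linarith)
  have htan_nonneg : 0 ≤ tan (a / 2) :=
    tan_nonneg_of_nonneg_of_le_pi_div_two (by linarith) (by linarith)
  have htan : tan (a / 2) < tan (b / 2) :=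
    tan_lt_tan_of_nonneg_of_lt_pi_div_two (by linarith) (by linarith) (by linarith)
  unfold steadyStateForcing
  gcongr

theorem tendsto_steadyStateForcing_pi (hα : 0 < α) :
    Tendsto (steadyStateForcing α) (𝓝[<] π) atTop := by
  have hid : Tendsto (fun a : ℝ => a) (𝓝[<] π) (𝓝 π) := tendsto_id.mono_left nhdsWithin_le_nhds
  have hexp : Tendsto (fun a => exp ((2 * a / α) * tan (a / 2))) (𝓝[<] π) atTop :=
    tendsto_exp_atTop.comp <| ((hid.const_mul 2).div_const α).pos_mul_atTop (by positivity)
      (tendsto_tan_pi_div_two.comp (tendsto_div_const_nhdsLT two_pos π))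
  have hcos : Tendsto (fun a => (cos (a / 2))⁻¹ ^ 2) (𝓝[<] π) atTop :=
    (tendsto_pow_atTop two_ne_zero).comp <| tendsto_inv_nhdsGT_zero.comp <|
      tendsto_cos_pi_div_two.comp (tendsto_div_const_nhdsLT two_pos π)
  have hprod := (((hid.pow 2).const_mul 2).pos_mul_atTop (by positivity) hexp).atTop_mul_atTop₀ hcos
  refine hprod.congr fun a => ?_
  rw [steadyStateForcing, inv_pow, ← div_eq_mul_inv]

end steadyStateForcing

/-- For α > 0, J_α(a) = 2a² e^{(2a/α) tan(a/2)} / cos²(a/2) is continuous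
and strictly increasing on (0, π), with J_α(a) → 0 as a → 0⁺ and J_α(a) → +∞ as
a → π⁻; hence for every M > 0 there is exactly one a ∈ (0, π) with J_α(a) = M. -/
theorem axial_current_controlled_parametrization (α : ℝ) (hα : 0 < α)
    (J : ℝ → ℝ)
    (hJ : ∀ a : ℝ,
      J a = 2 * a ^ 2 * Real.exp ((2 * a / α) * Real.tan (a / 2)) /
        Real.cos (a / 2) ^ 2) :
    ContinuousOn J (Set.Ioo 0 Real.pi) ∧
    StrictMonoOn J (Set.Ioo 0 Real.pi) ∧
    Filter.Tendsto J (nhdsWithin 0 (Set.Ioi 0)) (nhds 0) ∧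
    Filter.Tendsto J (nhdsWithin Real.pi (Set.Iio Real.pi)) Filter.atTop ∧
    (∀ M : ℝ, 0 < M → ∃! a : ℝ, a ∈ Set.Ioo 0 Real.pi ∧ J a = M) := by
  obtain rfl : J = steadyStateForcing α := funext hJ
  have hcont := (continuousOn_steadyStateForcing α).mono
    (Ioo_subset_Ioo_left (neg_nonpos.2 pi_pos.le))
  have hmono := (strictMonoOn_steadyStateForcing hα).mono Ioo_subset_Ico_self
  have hzero := (tendsto_steadyStateForcing_zero α).mono_left (nhdsWithin_le_nhds (s := Ioi 0))
  have hpi := tendsto_steadyStateForcing_pi hα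
  exact ⟨hcont, hmono, hzero, hpi, fun M hM =>
    existsUnique_mem_Ioo_eq_of_tendsto_atTop pi_pos hcont hmono.injOn hzero hpi hM⟩
end
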